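/- For any integer k ≥ 2 and any 0 ≤ ε < 1 one has M_{k,ε} ≤ (k/(k−1))·log(2k−1); equivalently, for every square-integrable F : [0,∞)^k → ℝ supported on (1+ε)·R_k, ∑_{i=1}^k J_{i,1−ε}(F) ≤ (k/(k−1))·log(2k−1)·I(F). -/

import Mathlib

open MeasureTheory

/-- The scaled simplex `c · R_k = {t ∈ [0,∞)^k : t₁ + ⋯ + t_k ≤ c}`. -/
def simplex (k : ℕ) (c : ℝ) : Set (Fin k → ℝ) :=
  {t | (∀ i, 0 ≤ t i) ∧ ∑ i, t i ≤ c}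

/-- `I(F) = ∫_{[0,∞)^k} F(t)² dt`. -/
noncomputable def sieveI {k : ℕ} (F : (Fin k → ℝ) → ℝ) : ℝ :=
  ∫ t in {t : Fin k → ℝ | ∀ i, 0 ≤ t i}, (F t) ^ 2

/-- `J_i(F) = ∫_{[0,∞)^{k-1}} (∫_0^∞ F(t) dt_i)² dt_1 ⋯ dt_{i-1} dt_{i+1} ⋯ dt_k`. -/
noncomputable def sieveJ {k : ℕ} (i : Fin k) (F : (Fin k → ℝ) → ℝ) : ℝ :=
  ∫ y in {y : {j : Fin k // j ≠ i} → ℝ | ∀ j, 0 ≤ y j},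
    (∫ s in Set.Ioi (0 : ℝ), F (fun j => if h : j = i then s else y ⟨j, h⟩)) ^ 2

/-- `M_k`, the supremum of `(∑ᵢ J_i(F))/I(F)` over square-integrable `F` supported
on the simplex `R_k` that are not almost everywhere zero. -/
noncomputable def Mquant (k : ℕ) : ℝ :=
  sSup {r : ℝ | ∃ F : (Fin k → ℝ) → ℝ, MemLp F 2 volume ∧
    (∀ t, t ∉ simplex k 1 → F t = 0) ∧ ¬ (F =ᵐ[volume] 0) ∧
    r = (∑ i, sieveJ i F) / sieveI F}


/-- `J_{i,1-ε}(F)`: the outer integral is restricted to the scaled simplex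
`(1-ε) · R_{k-1}` in the variables other than `t_i`. -/
noncomputable def sieveJE {k : ℕ} (ε : ℝ) (i : Fin k) (F : (Fin k → ℝ) → ℝ) : ℝ :=
  ∫ y in {y : {j : Fin k // j ≠ i} → ℝ | (∀ j, 0 ≤ y j) ∧ ∑ j, y j ≤ 1 - ε},
    (∫ s in Set.Ioi (0 : ℝ), F (fun j => if h : j = i then s else y ⟨j, h⟩)) ^ 2

/-- `M_{k,ε}`, the supremum of `(∑ᵢ J_{i,1-ε}(F))/I(F)` over square-integrable `F`
supported on `(1+ε) · R_k` that are not almost everywhere zero. -/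
noncomputable def MquantE (k : ℕ) (ε : ℝ) : ℝ :=
  sSup {r : ℝ | ∃ F : (Fin k → ℝ) → ℝ, MemLp F 2 volume ∧
    (∀ t, t ∉ simplex k (1 + ε) → F t = 0) ∧ ¬ (F =ᵐ[volume] 0) ∧
    r = (∑ i, sieveJE ε i F) / sieveI F}

/-!
Weighted Cauchy–Schwarz on the lines in direction `i` bounds `∑ᵢ J_{i,1-ε}(F)` by `C · B · I(F)`
whenever positive weights `wᵢ(t)` sum to at most `B` over the coordinates `i` whose line through `t`
enters into `J_{i,1-ε}` (the admissible ones) and `1/wᵢ` integrates to at most `C` along each such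
line. For `S = ∑ⱼ tⱼ` the natural weights `1 - S + k tᵢ` sum to `k`, and their reciprocals
integrate to logarithms divided by `k - 1`, because along a line they have slope `k - 1`. Since they
can become negative once `S > 1`, they are used only for `S < c`; for `S ≥ c` all admissible
coordinates receive the same weight, and the reciprocal integral counts admissible coordinates. The
threshold `c = 1` gives `C = log (2k-1) / (k-1)` for `ε ≤ 1/3`, and `c = 1 - ε` does so for
`ε ≥ 1/3`.
-/

section CauchySchwarz

variable {α : Type*} [MeasurableSpace α] {μ : Measure α}

theorem sq_lintegral_mul_le_lintegral_sq_mul_lintegral_sq {f g : α → ENNReal}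
    (hf : AEMeasurable f μ) (hg : AEMeasurable g μ) :
    (∫⁻ a, f a * g a ∂μ) ^ 2 ≤ (∫⁻ a, f a ^ 2 ∂μ) * ∫⁻ a, g a ^ 2 ∂μ := by
  have hholder := ENNReal.lintegral_mul_le_Lp_mul_Lq μ Real.HolderConjugate.two_two hf hg
  have sq_rpow_half (x : ENNReal) : (x ^ (1 / 2 : ℝ)) ^ 2 = x := by
    rw [← ENNReal.rpow_mul_natCast]
    norm_num
  calc (∫⁻ a, f a * g a ∂μ) ^ 2
      ≤ ((∫⁻ a, f a ^ (2 : ℝ) ∂μ) ^ (1 / 2 : ℝ) * (∫⁻ a, g a ^ (2 : ℝ) ∂μ) ^ (1 / 2 : ℝ)) ^ 2 :=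
        pow_le_pow_left' hholder 2
    _ = (∫⁻ a, f a ^ 2 ∂μ) * ∫⁻ a, g a ^ 2 ∂μ := by
        simp only [mul_pow, sq_rpow_half, ENNReal.rpow_two]

theorem sq_enorm_integral_le_lintegral_inv_mul_lintegral_mul {E : Type*} [NormedAddCommGroup E]
    [NormedSpace ℝ E] {f : α → E} {w : α → ℝ} (hf : AEStronglyMeasurable f μ)
    (hw : AEMeasurable w μ) (hpos : ∀ᵐ a ∂μ, 0 < w a) :
    ‖∫ a, f a ∂μ‖ₑ ^ 2 ≤
      (∫⁻ a, ENNReal.ofReal (w a)⁻¹ ∂μ) * ∫⁻ a, ‖f a‖ₑ ^ 2 * ENNReal.ofReal (w a) ∂μ := by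
  let p (a : α) : ENNReal := ENNReal.ofReal √(w a)⁻¹
  let q (a : α) : ENNReal := ‖f a‖ₑ * ENNReal.ofReal √(w a)
  have hp : AEMeasurable p μ := hw.inv.sqrt.ennreal_ofReal
  have hq : AEMeasurable q μ := hf.enorm.mul hw.sqrt.ennreal_ofReal
  have hpq : ∀ᵐ a ∂μ, ‖f a‖ₑ = p a * q a := by
    filter_upwards [hpos] with a ha
    have hcancel : √(w a)⁻¹ * √(w a) = 1 := by
      rw [← Real.sqrt_mul (inv_nonneg.2 ha.le), inv_mul_cancel₀ ha.ne', Real.sqrt_one]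
    rw [mul_left_comm, ← ENNReal.ofReal_mul (Real.sqrt_nonneg _), hcancel, ENNReal.ofReal_one,
      mul_one]
  have hp_sq : ∀ᵐ a ∂μ, p a ^ 2 = ENNReal.ofReal (w a)⁻¹ := by
    filter_upwards [hpos] with a ha
    rw [← ENNReal.ofReal_pow (Real.sqrt_nonneg _), Real.sq_sqrt (inv_nonneg.2 ha.le)]
  have hq_sq : ∀ᵐ a ∂μ, q a ^ 2 = ‖f a‖ₑ ^ 2 * ENNReal.ofReal (w a) := by
    filter_upwards [hpos] with a ha
    rw [mul_pow, ← ENNReal.ofReal_pow (Real.sqrt_nonneg _), Real.sq_sqrt ha.le]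
  calc ‖∫ a, f a ∂μ‖ₑ ^ 2 ≤ (∫⁻ a, ‖f a‖ₑ ∂μ) ^ 2 :=
        pow_le_pow_left' (enorm_integral_le_lintegral_enorm f) 2
    _ = (∫⁻ a, p a * q a ∂μ) ^ 2 := by rw [lintegral_congr_ae hpq]
    _ ≤ (∫⁻ a, p a ^ 2 ∂μ) * ∫⁻ a, q a ^ 2 ∂μ :=
        sq_lintegral_mul_le_lintegral_sq_mul_lintegral_sq hp hq
    _ = _ := by rw [lintegral_congr_ae hp_sq, lintegral_congr_ae hq_sq]

end CauchySchwarz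

theorem setLIntegral_Ioo_inv_add_mul {a m b : ℝ} (ha : 0 < a) (hm : 0 < m) (hb : 0 ≤ b) :
    ∫⁻ s in Set.Ioo 0 b, ENNReal.ofReal (a + m * s)⁻¹ =
      ENNReal.ofReal (Real.log (1 + m * (b / a)) / m) := by
  have hpos {s : ℝ} (hs : 0 ≤ s) : 0 < a + m * s := by positivity
  have hcont : ContinuousOn (fun s => (a + m * s)⁻¹) (Set.uIcc 0 b) := by
    rw [Set.uIcc_of_le hb]
    exact ContinuousOn.inv₀ (by fun_prop) fun s hs => (hpos hs.1).ne'
  have hint : IntegrableOn (fun s => (a + m * s)⁻¹) (Set.Ioc 0 b) :=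
    (intervalIntegrable_iff_integrableOn_Ioc_of_le hb).1 hcont.intervalIntegrable
  have hnonneg : 0 ≤ᵐ[volume.restrict (Set.Ioc 0 b)] fun s => (a + m * s)⁻¹ :=
    (ae_restrict_iff' measurableSet_Ioc).2 (ae_of_all _ fun s hs => (inv_pos.2 (hpos hs.1.le)).le)
  have hintegral : ∫ s in 0..b, (a + m * s)⁻¹ = Real.log (1 + m * (b / a)) / m := by
    rw [intervalIntegral.integral_comp_add_mul (fun x => x⁻¹) hm.ne',
      integral_inv_of_pos (hpos le_rfl) (hpos hb), smul_eq_mul, inv_mul_eq_div]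
    congr 2
    field_simp
    ring
  rw [setLIntegral_congr Ioo_ae_eq_Ioc, ← ofReal_integral_eq_lintegral_ofReal hint hnonneg,
    ← intervalIntegral.integral_of_le hb, hintegral]

section InsertCoord

variable {ι α : Type*} [DecidableEq ι]

/-- The point of `ι → α` whose `i`-th coordinate is `s` and whose other coordinates are `y`; the
inner integral in `J_i(F)` runs over `s ↦ F (insertCoord i y s)`. -/
def insertCoord (i : ι) (y : {j // j ≠ i} → α) (s : α) : ι → α :=
  fun j => if h : j = i then s else y ⟨j, h⟩

@[simp]
theorem insertCoord_self (i : ι) (y : {j // j ≠ i} → α) (s : α) : insertCoord i y s i = s := by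
  simp [insertCoord]

@[simp]
theorem insertCoord_coe_ne (i : ι) (y : {j // j ≠ i} → α) (s : α) (j : {j // j ≠ i}) :
    insertCoord i y s j = y j := by
  simp [insertCoord, j.2]

@[simp]
theorem sum_insertCoord [Fintype ι] [AddCommMonoid α] (i : ι) (y : {j // j ≠ i} → α) (s : α) :
    ∑ j, insertCoord i y s j = s + ∑ j, y j := by
  rw [Fintype.sum_eq_add_sum_subtype_ne _ i]
  simp only [insertCoord_self, insertCoord_coe_ne]

variable [MeasurableSpace α]

theorem measurable_uncurry_insertCoord (i : ι) :
    Measurable (Function.uncurry (insertCoord (α := α) i)) := by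
  refine measurable_pi_lambda _ fun j => ?_
  by_cases h : j = i
  · simpa [Function.uncurry, insertCoord, h] using measurable_snd
  · simp only [Function.uncurry, insertCoord, h, dite_false]
    exact (measurable_pi_apply _).comp measurable_fst

variable [Fintype ι]

theorem measurePreserving_uncurry_insertCoord (μ : ι → Measure α) [∀ j, SigmaFinite (μ j)]
    (i : ι) :
    MeasurePreserving (Function.uncurry (insertCoord i))
      ((Measure.pi fun j : {j // j ≠ i} => μ j).prod (μ i)) (Measure.pi μ) := by
  refine ⟨measurable_uncurry_insertCoord i, (Measure.pi_eq fun s hs => ?_).symm⟩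
  have hpreimage : Function.uncurry (insertCoord i) ⁻¹' Set.univ.pi s =
      (Set.univ.pi fun j : {j // j ≠ i} => s j) ×ˢ s i := by
    ext ⟨y, x⟩
    simp only [Set.mem_preimage, Function.uncurry_apply_pair, Set.mem_univ_pi, Set.mem_prod]
    constructor
    · intro h
      exact ⟨fun j => by simpa using h j, by simpa using h i⟩
    · rintro ⟨hy, hx⟩ j
      by_cases h : j = i
      · subst h
        simpa using hx
      · simpa [insertCoord, h] using hy ⟨j, h⟩
  rw [Measure.map_apply (measurable_uncurry_insertCoord i) (.univ_pi hs), hpreimage,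
    Measure.prod_prod, Measure.pi_pi, Fintype.prod_eq_mul_prod_subtype_ne _ i, mul_comm]

theorem lintegral_pi_eq_lintegral_insertCoord (μ : ι → Measure α) [∀ j, SigmaFinite (μ j)]
    (i : ι) {g : (ι → α) → ENNReal} (hg : AEMeasurable g (Measure.pi μ)) :
    ∫⁻ t, g t ∂Measure.pi μ =
      ∫⁻ y, ∫⁻ s, g (insertCoord i y s) ∂μ i ∂Measure.pi fun j : {j // j ≠ i} => μ j := by
  have hmp := measurePreserving_uncurry_insertCoord μ i
  rw [← hmp.map_eq] at hg ⊢
  rw [lintegral_map' hg hmp.aemeasurable]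
  exact lintegral_prod _ (hg.comp_aemeasurable hmp.aemeasurable)

theorem ae_aestronglyMeasurable_comp_insertCoord {β : Type*} [TopologicalSpace β]
    (μ : ι → Measure α) [∀ j, SigmaFinite (μ j)] (i : ι) {F : (ι → α) → β}
    (hF : AEStronglyMeasurable F (Measure.pi μ)) :
    ∀ᵐ y ∂Measure.pi fun j : {j // j ≠ i} => μ j,
      AEStronglyMeasurable (fun s => F (insertCoord i y s)) (μ i) :=
  (hF.comp_measurePreserving (measurePreserving_uncurry_insertCoord μ i)).prodMk_left

end InsertCoord

section SchurTest

variable {k : ℕ} {ε : ℝ} {F : (Fin k → ℝ) → ℝ} {i : Fin k}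

/-- The coordinates `i` whose removal projects `t` into the region `(1-ε) · R_{k-1}` (for `t` with
nonnegative entries), i.e. those for which the line through `t` in direction `i` enters into
`J_{i,1-ε}`. -/
noncomputable def admissible (ε : ℝ) (t : Fin k → ℝ) : Finset (Fin k) :=
  {i | ∑ j, t j - t i ≤ 1 - ε}

theorem mem_admissible {t : Fin k → ℝ} : i ∈ admissible ε t ↔ ∑ j, t j - t i ≤ 1 - ε := by
  simp [admissible]

theorem mem_admissible_insertCoord {y : {j // j ≠ i} → ℝ} {s : ℝ} :
    i ∈ admissible ε (insertCoord i y s) ↔ ∑ j, y j ≤ 1 - ε := by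
  simp [mem_admissible]

theorem measurableSet_setOf_mem_admissible (ε : ℝ) (i : Fin k) :
    MeasurableSet {t | i ∈ admissible ε t} := by
  simp only [mem_admissible]
  exact measurableSet_le (by fun_prop) measurable_const

theorem measurableSet_setOf_nonneg (ι : Type*) [Countable ι] :
    MeasurableSet {t : ι → ℝ | ∀ i, 0 ≤ t i} := by
  simp only [Set.ofPred_forall]
  exact .iInter fun i => measurableSet_le measurable_const (measurable_pi_apply i)

theorem measurableSet_nonneg_sum_le {ι : Type*} [Fintype ι] (r : ℝ) :
    MeasurableSet {t : ι → ℝ | (∀ i, 0 ≤ t i) ∧ ∑ i, t i ≤ r} := by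
  have hsum : Measurable fun t : ι → ℝ => ∑ i, t i := by fun_prop
  exact (measurableSet_setOf_nonneg ι).inter (measurableSet_le hsum measurable_const)

theorem sq_enorm_integral_insertCoord_le (hsupp : ∀ t, t ∉ simplex k (1 + ε) → F t = 0)
    {w : (Fin k → ℝ) → ℝ} (hw : Measurable w)
    (hpos : ∀ t, (∀ j, 0 ≤ t j) → i ∈ admissible ε t → 0 < w t)
    {y : {j // j ≠ i} → ℝ} (hy0 : ∀ j, 0 ≤ y j) (hy : ∑ j, y j ≤ 1 - ε)
    (hF : AEStronglyMeasurable fun s => F (insertCoord i y s)) :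
    ‖∫ s in Set.Ioi 0, F (insertCoord i y s)‖ₑ ^ 2 ≤
      (∫⁻ s in Set.Ioc 0 (1 + ε - ∑ j, y j), ENNReal.ofReal (w (insertCoord i y s))⁻¹) *
        ∫⁻ s, ‖F (insertCoord i y s)‖ₑ ^ 2 * ENNReal.ofReal (w (insertCoord i y s)) := by
  have hvanish : ∀ s ∈ Set.Ioi 0 \ Set.Ioc 0 (1 + ε - ∑ j, y j), F (insertCoord i y s) = 0 := by
    rintro s ⟨hs0, hs⟩
    refine hsupp _ fun hmem => hs ⟨hs0, ?_⟩
    have hsum := hmem.2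
    rw [sum_insertCoord] at hsum
    linarith
  have hpos' : ∀ᵐ s ∂volume.restrict (Set.Ioc 0 (1 + ε - ∑ j, y j)),
      0 < w (insertCoord i y s) := by
    refine (ae_restrict_iff' measurableSet_Ioc).2 (ae_of_all _ fun s hs => ?_)
    refine hpos _ (fun j => ?_) (mem_admissible_insertCoord.2 hy)
    unfold insertCoord
    split_ifs
    exacts [hs.1.le, hy0 _]
  have hw' : Measurable fun s => w (insertCoord i y s) :=
    hw.comp ((measurable_uncurry_insertCoord i).comp measurable_prodMk_left)
  rw [setIntegral_eq_of_subset_of_forall_sdiff_eq_zero measurableSet_Ioi Set.Ioc_subset_Ioi_self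
    hvanish]
  refine (sq_enorm_integral_le_lintegral_inv_mul_lintegral_mul hF.restrict hw'.aemeasurable
    hpos').trans ?_
  gcongr
  exact Measure.restrict_le_self

theorem setLIntegral_insertCoord_le_setLIntegral_admissible (ε : ℝ) (i : Fin k)
    {g : (Fin k → ℝ) → ENNReal} (hg : AEMeasurable g) :
    ∫⁻ y in {y : {j // j ≠ i} → ℝ | (∀ j, 0 ≤ y j) ∧ ∑ j, y j ≤ 1 - ε},
      ∫⁻ s, g (insertCoord i y s) ≤ ∫⁻ t in {t | i ∈ admissible ε t}, g t := by
  have hmeas := measurableSet_setOf_mem_admissible ε i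
  have htonelli : ∫⁻ t, {t | i ∈ admissible ε t}.indicator g t =
      ∫⁻ y : {j // j ≠ i} → ℝ, ∫⁻ s, {t | i ∈ admissible ε t}.indicator g (insertCoord i y s) :=
    lintegral_pi_eq_lintegral_insertCoord (fun _ => volume) i (hg.indicator hmeas)
  rw [← lintegral_indicator hmeas, htonelli]
  refine (setLIntegral_mono' (measurableSet_nonneg_sum_le _) fun y hy => ?_).trans
    (setLIntegral_le_lintegral _ _)
  simp [Set.indicator, mem_admissible_insertCoord, hy.2]

theorem ofReal_sieveJE_le {C : ℝ} {w : (Fin k → ℝ) → ℝ} (hw : Measurable w)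
    (hpos : ∀ t, (∀ j, 0 ≤ t j) → i ∈ admissible ε t → 0 < w t)
    (hfibre : ∀ y : {j // j ≠ i} → ℝ, (∀ j, 0 ≤ y j) → ∑ j, y j ≤ 1 - ε →
      ∫⁻ s in Set.Ioc 0 (1 + ε - ∑ j, y j), ENNReal.ofReal (w (insertCoord i y s))⁻¹ ≤
        ENNReal.ofReal C)
    (hF : AEStronglyMeasurable F) (hsupp : ∀ t, t ∉ simplex k (1 + ε) → F t = 0) :
    ENNReal.ofReal (sieveJE ε i F) ≤ ENNReal.ofReal C *
      ∫⁻ t in {t | i ∈ admissible ε t}, ‖F t‖ₑ ^ 2 * ENNReal.ofReal (w t) := by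
  let A : Set ({j // j ≠ i} → ℝ) := {y | (∀ j, 0 ≤ y j) ∧ ∑ j, y j ≤ 1 - ε}
  let g (t : Fin k → ℝ) : ENNReal := ‖F t‖ₑ ^ 2 * ENNReal.ofReal (w t)
  have hg : AEMeasurable g := (hF.enorm.pow_const 2).mul hw.ennreal_ofReal.aemeasurable
  calc ENNReal.ofReal (sieveJE ε i F)
      ≤ ‖∫ y in A, (∫ s in Set.Ioi 0, F (insertCoord i y s)) ^ 2‖ₑ := Real.ofReal_le_enorm _
    _ ≤ ∫⁻ y in A, ‖∫ s in Set.Ioi 0, F (insertCoord i y s)‖ₑ ^ 2 := by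
        refine (enorm_integral_le_lintegral_enorm _).trans_eq (lintegral_congr fun y => ?_)
        rw [enorm_pow]
    _ ≤ ∫⁻ y in A, ENNReal.ofReal C * ∫⁻ s, g (insertCoord i y s) := by
        refine setLIntegral_mono_ae' (measurableSet_nonneg_sum_le _) ?_
        filter_upwards [ae_aestronglyMeasurable_comp_insertCoord (fun _ => volume) i hF]
          with y hFy hy
        refine (sq_enorm_integral_insertCoord_le hsupp hw hpos hy.1 hy.2 hFy).trans ?_
        gcongr
        exact hfibre y hy.1 hy.2
    _ = ENNReal.ofReal C * ∫⁻ y in A, ∫⁻ s, g (insertCoord i y s) :=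
        lintegral_const_mul' _ _ ENNReal.ofReal_ne_top
    _ ≤ ENNReal.ofReal C * ∫⁻ t in {t | i ∈ admissible ε t}, g t := by
        gcongr
        exact setLIntegral_insertCoord_le_setLIntegral_admissible ε i hg

theorem sieveJE_nonneg (ε : ℝ) (i : Fin k) (F : (Fin k → ℝ) → ℝ) : 0 ≤ sieveJE ε i F :=
  integral_nonneg fun _ => sq_nonneg _

theorem sieveI_nonneg (F : (Fin k → ℝ) → ℝ) : 0 ≤ sieveI F :=
  integral_nonneg fun _ => sq_nonneg _

theorem ofReal_sieveI (hF : MemLp F 2) :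
    ENNReal.ofReal (sieveI F) = ∫⁻ t in {t : Fin k → ℝ | ∀ i, 0 ≤ t i}, ‖F t‖ₑ ^ 2 := by
  rw [sieveI, ofReal_integral_eq_lintegral_ofReal hF.integrable_sq.restrict
    (ae_of_all _ fun t => sq_nonneg _)]
  simp only [← Real.enorm_of_nonneg (sq_nonneg _), enorm_pow]

theorem sum_setLIntegral_admissible_le {B : ℝ} {w : Fin k → (Fin k → ℝ) → ℝ}
    (hw : ∀ i, Measurable (w i))
    (hpos : ∀ t, (∀ j, 0 ≤ t j) → ∀ i ∈ admissible ε t, 0 < w i t)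
    (hsum : ∀ t, (∀ j, 0 ≤ t j) → ∑ i ∈ admissible ε t, w i t ≤ B)
    (hF : MemLp F 2) (hsupp : ∀ t, t ∉ simplex k (1 + ε) → F t = 0) :
    ∑ i, ∫⁻ t in {t | i ∈ admissible ε t}, ‖F t‖ₑ ^ 2 * ENNReal.ofReal (w i t) ≤
      ENNReal.ofReal B * ENNReal.ofReal (sieveI F) := by
  let g (i : Fin k) : (Fin k → ℝ) → ENNReal :=
    {t | i ∈ admissible ε t}.indicator fun t => ‖F t‖ₑ ^ 2 * ENNReal.ofReal (w i t)
  have hg (i : Fin k) : AEMeasurable (g i) :=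
    ((hF.1.enorm.pow_const 2).mul (hw i).ennreal_ofReal.aemeasurable).indicator
      (measurableSet_setOf_mem_admissible ε i)
  have hle (t : Fin k → ℝ) : ∑ i, g i t ≤
      {t : Fin k → ℝ | ∀ i, 0 ≤ t i}.indicator (fun t => ENNReal.ofReal B * ‖F t‖ₑ ^ 2) t := by
    by_cases ht : t ∈ simplex k (1 + ε)
    · rw [Set.indicator_of_mem (show t ∈ {t : Fin k → ℝ | ∀ i, 0 ≤ t i} from ht.1)]
      calc ∑ i, g i t = ∑ i ∈ admissible ε t, ‖F t‖ₑ ^ 2 * ENNReal.ofReal (w i t) := by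
            simp [g, Set.indicator_apply, Finset.sum_ite_mem]
        _ = ENNReal.ofReal (∑ i ∈ admissible ε t, w i t) * ‖F t‖ₑ ^ 2 := by
            rw [← Finset.mul_sum, mul_comm,
              ENNReal.ofReal_sum_of_nonneg fun i hi => (hpos t ht.1 i hi).le]
        _ ≤ ENNReal.ofReal B * ‖F t‖ₑ ^ 2 := by
            gcongr
            exact hsum t ht.1
    · simp [g, Set.indicator_apply, hsupp t ht]
  calc ∑ i, ∫⁻ t in {t | i ∈ admissible ε t}, ‖F t‖ₑ ^ 2 * ENNReal.ofReal (w i t)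
      = ∫⁻ t, ∑ i, g i t := by
        rw [lintegral_finsetSum' _ fun i _ => hg i]
        simp only [g, lintegral_indicator (measurableSet_setOf_mem_admissible ε _)]
    _ ≤ ∫⁻ t in {t : Fin k → ℝ | ∀ i, 0 ≤ t i}, ENNReal.ofReal B * ‖F t‖ₑ ^ 2 := by
        rw [← lintegral_indicator (measurableSet_setOf_nonneg _)]
        exact lintegral_mono hle
    _ = ENNReal.ofReal B * ENNReal.ofReal (sieveI F) := by
        rw [lintegral_const_mul' _ _ ENNReal.ofReal_ne_top, ofReal_sieveI hF]

theorem sum_sieveJE_le_of_weight {B C : ℝ} (hC : 0 ≤ C)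
    {w : Fin k → (Fin k → ℝ) → ℝ} (hw : ∀ i, Measurable (w i))
    (hpos : ∀ t, (∀ j, 0 ≤ t j) → ∀ i ∈ admissible ε t, 0 < w i t)
    (hsum : ∀ t, (∀ j, 0 ≤ t j) → ∑ i ∈ admissible ε t, w i t ≤ B)
    (hfibre : ∀ i, ∀ y : {j // j ≠ i} → ℝ, (∀ j, 0 ≤ y j) → ∑ j, y j ≤ 1 - ε →
      ∫⁻ s in Set.Ioc 0 (1 + ε - ∑ j, y j), ENNReal.ofReal (w i (insertCoord i y s))⁻¹ ≤
        ENNReal.ofReal C)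
    (hF : MemLp F 2) (hsupp : ∀ t, t ∉ simplex k (1 + ε) → F t = 0) :
    ∑ i, sieveJE ε i F ≤ C * B * sieveI F := by
  have hB : 0 ≤ B := (Finset.sum_nonneg fun i hi => (hpos 0 (fun _ => le_rfl) i hi).le).trans
    (hsum 0 fun _ => le_rfl)
  have hI := sieveI_nonneg F
  rw [← ENNReal.ofReal_le_ofReal_iff (by positivity),
    ENNReal.ofReal_sum_of_nonneg fun i _ => sieveJE_nonneg ε i F]
  calc ∑ i, ENNReal.ofReal (sieveJE ε i F)
      ≤ ∑ i, ENNReal.ofReal C *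
          ∫⁻ t in {t | i ∈ admissible ε t}, ‖F t‖ₑ ^ 2 * ENNReal.ofReal (w i t) :=
        Finset.sum_le_sum fun i _ =>
          ofReal_sieveJE_le (hw i) (fun t ht => hpos t ht i) (hfibre i) hF.1 hsupp
    _ ≤ ENNReal.ofReal C * (ENNReal.ofReal B * ENNReal.ofReal (sieveI F)) := by
        rw [← Finset.mul_sum]
        gcongr
        exact sum_setLIntegral_admissible_le hw hpos hsum hF hsupp
    _ = ENNReal.ofReal (C * B * sieveI F) := by
        rw [ENNReal.ofReal_mul (by positivity), ENNReal.ofReal_mul hC, mul_assoc]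

end SchurTest

section SchurWeight

variable {k : ℕ} {ε c : ℝ} {i : Fin k}

/-- The weight in the Schur test. Below the threshold `c` it is affine and sums to `k` over all
coordinates, with a reciprocal that integrates to a logarithm along lines; from `c` on, the mass `k`
is shared equally among the admissible coordinates (junk value `0` if there are none). -/
noncomputable def schurWeight (ε c : ℝ) (i : Fin k) (t : Fin k → ℝ) : ℝ :=
  if ∑ j, t j < c then 1 - ∑ j, t j + k * t i else k / (admissible ε t).card

theorem measurable_card_admissible (ε : ℝ) :
    Measurable fun t : Fin k → ℝ => (admissible ε t).card := by
  simp only [admissible, Finset.card_filter]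
  exact Finset.measurable_sum _ fun i _ => Measurable.ite
    (measurableSet_le (by fun_prop) measurable_const) measurable_const measurable_const

theorem measurable_schurWeight (ε c : ℝ) (i : Fin k) : Measurable (schurWeight ε c i) := by
  have hsum : Measurable fun t : Fin k → ℝ => ∑ j, t j := by fun_prop
  exact Measurable.ite (measurableSet_lt hsum measurable_const) (by fun_prop)
    (measurable_const.div (measurable_from_nat.comp (measurable_card_admissible ε)))

theorem schurWeight_pos (hc : c ≤ 1) {t : Fin k → ℝ} (ht : 0 ≤ t i) (hi : i ∈ admissible ε t) :
    0 < schurWeight ε c i t := by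
  unfold schurWeight
  split_ifs with h
  · have : 0 ≤ k * t i := by positivity
    linarith
  · have hk : 0 < k := i.pos
    have hcard : 0 < (admissible ε t).card := Finset.card_pos.2 ⟨i, hi⟩
    positivity

theorem sum_admissible_schurWeight_le (hc : c ≤ 1) {t : Fin k → ℝ} (ht : ∀ i, 0 ≤ t i) :
    ∑ i ∈ admissible ε t, schurWeight ε c i t ≤ k := by
  unfold schurWeight
  split_ifs with h
  · calc ∑ i ∈ admissible ε t, (1 - ∑ j, t j + k * t i)
        ≤ ∑ i, (1 - ∑ j, t j + k * t i) :=
          Finset.sum_le_univ_sum_of_nonneg fun i => by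
            have := mul_nonneg k.cast_nonneg (ht i)
            linarith
      _ = k := by
          rw [Finset.sum_add_distrib, ← Finset.mul_sum]
          simp only [Finset.sum_const, Finset.card_univ, Fintype.card_fin, nsmul_eq_mul]
          ring
  · rw [Finset.sum_const, nsmul_eq_mul]
    rw [mul_div_left_comm]
    exact mul_le_of_le_one_right k.cast_nonneg (div_self_le_one _)

variable {y : {j // j ≠ i} → ℝ}

theorem setLIntegral_inv_schurWeight_of_lt (hk : 1 < k) (hc : c ≤ 1) (hy : ∑ j, y j ≤ c) :
    ∫⁻ s in Set.Ioo 0 (c - ∑ j, y j), ENNReal.ofReal (schurWeight ε c i (insertCoord i y s))⁻¹ =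
      ENNReal.ofReal
        (Real.log (1 + (k - 1) * ((c - ∑ j, y j) / (1 - ∑ j, y j))) / (k - 1)) := by
  rcases hy.eq_or_lt with heq | hlt
  · simp [heq]
  have hm : (0 : ℝ) < k - 1 := by
    rw [sub_pos]
    exact_mod_cast hk
  rw [← setLIntegral_Ioo_inv_add_mul (by linarith) hm (by linarith)]
  refine setLIntegral_congr_fun measurableSet_Ioo fun s hs => ?_
  have hs_lt : s + ∑ j, y j < c := lt_sub_iff_add_lt.1 hs.2
  simp only [schurWeight, sum_insertCoord, insertCoord_self, if_pos hs_lt]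
  ring_nf

theorem lintegral_card_admissible_insertCoord (ε : ℝ) (i : Fin k) (y : {j // j ≠ i} → ℝ)
    (μ : Measure ℝ) :
    ∫⁻ s, (admissible ε (insertCoord i y s)).card ∂μ =
      ∑ j, μ {s | j ∈ admissible ε (insertCoord i y s)} := by
  have hmeas (j : Fin k) : MeasurableSet {s | j ∈ admissible ε (insertCoord i y s)} :=
    ((measurable_uncurry_insertCoord i).comp measurable_prodMk_left)
      (measurableSet_setOf_mem_admissible ε j)
  have hcard (s : ℝ) : ((admissible ε (insertCoord i y s)).card : ENNReal) =
      ∑ j, {s | j ∈ admissible ε (insertCoord i y s)}.indicator 1 s := by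
    simp [Set.indicator_apply]
  simp only [hcard]
  rw [lintegral_finsetSum _ fun j _ => measurable_one.indicator (hmeas j)]
  simp only [lintegral_indicator_one (hmeas _)]

theorem setLIntegral_card_admissible_insertCoord_le {lam : ℝ} (hcε : c ≤ 1 + ε) (hlam0 : 0 ≤ lam)
    (hlam : ∀ τ, 0 ≤ τ → min (τ + (1 - ε)) (1 + ε) ≤ c + lam * τ) (hy : ∀ j, 0 ≤ y j) :
    ∫⁻ s in Set.Icc (c - ∑ j, y j) (1 + ε - ∑ j, y j),
        ((admissible ε (insertCoord i y s)).card : ENNReal) ≤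
      ENNReal.ofReal (1 + ε - c + lam * ∑ j, y j) := by
  let A : Set ℝ := Set.Icc (c - ∑ j, y j) (1 + ε - ∑ j, y j)
  have hself : volume.restrict A {s | i ∈ admissible ε (insertCoord i y s)} ≤
      ENNReal.ofReal (1 + ε - c) := by
    calc _ ≤ volume.restrict A Set.univ := measure_mono (Set.subset_univ _)
      _ = ENNReal.ofReal (1 + ε - c) := by
        rw [Measure.restrict_apply_univ, Real.volume_Icc, sub_sub_sub_cancel_right]
  have hother (j : {j // j ≠ i}) :
      volume.restrict A {s | ↑j ∈ admissible ε (insertCoord i y s)} ≤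
        ENNReal.ofReal (lam * y j) := by
    have hsubset : {s | ↑j ∈ admissible ε (insertCoord i y s)} ∩ A ⊆
        Set.Icc (c - ∑ j, y j) (min (y j + (1 - ε)) (1 + ε) - ∑ j, y j) := by
      rintro s ⟨hs, hs_ge, hs_le⟩
      rw [Set.mem_ofPred_eq, mem_admissible, sum_insertCoord, insertCoord_coe_ne] at hs
      refine ⟨hs_ge, le_sub_iff_add_le.2 (le_min ?_ ?_)⟩ <;> linarith
    rw [Measure.restrict_apply' measurableSet_Icc]
    refine (measure_mono hsubset).trans ?_
    rw [Real.volume_Icc, sub_sub_sub_cancel_right]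
    exact ENNReal.ofReal_le_ofReal (by linarith [hlam (y j) (hy j)])
  rw [lintegral_card_admissible_insertCoord, Fintype.sum_eq_add_sum_subtype_ne _ i,
    ENNReal.ofReal_add (by linarith) (mul_nonneg hlam0 (Finset.sum_nonneg fun j _ => hy j)),
    Finset.mul_sum, ENNReal.ofReal_sum_of_nonneg fun j _ => mul_nonneg hlam0 (hy j)]
  exact add_le_add hself (Finset.sum_le_sum fun j _ => hother j)

theorem setLIntegral_inv_schurWeight_of_ge :
    ∫⁻ s in Set.Icc (c - ∑ j, y j) (1 + ε - ∑ j, y j),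
        ENNReal.ofReal (schurWeight ε c i (insertCoord i y s))⁻¹ =
      (∫⁻ s in Set.Icc (c - ∑ j, y j) (1 + ε - ∑ j, y j),
        ((admissible ε (insertCoord i y s)).card : ENNReal)) / k := by
  have hk : (0 : ℝ) < k := Nat.cast_pos.2 i.pos
  simp only [div_eq_mul_inv]
  rw [← lintegral_mul_const' _ _ (by simp [i.pos.ne'])]
  refine setLIntegral_congr_fun measurableSet_Icc fun s hs => ?_
  have hs_ge : ¬ s + ∑ j, y j < c := not_lt.2 (sub_le_iff_le_add.1 hs.1)
  simp only [schurWeight, sum_insertCoord, if_neg hs_ge, inv_div]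
  rw [ENNReal.ofReal_div_of_pos hk, ENNReal.ofReal_natCast, ENNReal.ofReal_natCast, div_eq_mul_inv]

/-- The bound that the Schur test yields for the integral of the reciprocal of `schurWeight ε c i`
along a line in direction `i` whose other coordinates sum to `σ`. Here `K` is the dimension, and
`c + lam * τ` bounds the value of the coordinate sum up to which a coordinate equal to `τ` stays
admissible within `(1+ε) · R_k`. -/
noncomputable def schurFibreBound (K ε c lam σ : ℝ) : ℝ :=
  Real.log (1 + (K - 1) * ((c - σ) / (1 - σ))) / (K - 1) + (1 + ε - c + lam * σ) / K

theorem setLIntegral_inv_schurWeight_le {lam : ℝ} (hk : 1 < k) (hc : c ≤ 1) (hcε : c ≤ 1 + ε)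
    (hlam0 : 0 ≤ lam) (hlam : ∀ τ, 0 ≤ τ → min (τ + (1 - ε)) (1 + ε) ≤ c + lam * τ)
    (hy0 : ∀ j, 0 ≤ y j) (hy : ∑ j, y j ≤ c) :
    ∫⁻ s in Set.Ioc 0 (1 + ε - ∑ j, y j),
        ENNReal.ofReal (schurWeight ε c i (insertCoord i y s))⁻¹ ≤
      ENNReal.ofReal (schurFibreBound k ε c lam (∑ j, y j)) := by
  let σ : ℝ := ∑ j, y j
  let f (s : ℝ) : ENNReal := ENNReal.ofReal (schurWeight ε c i (insertCoord i y s))⁻¹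
  have hk0 : (0 : ℝ) < k := Nat.cast_pos.2 i.pos
  have hk1 : (0 : ℝ) ≤ k - 1 := by
    rw [sub_nonneg]
    exact_mod_cast hk.le
  have hσ : 0 ≤ σ := Finset.sum_nonneg fun j _ => hy0 j
  have hlog : 0 ≤ Real.log (1 + (k - 1) * ((c - σ) / (1 - σ))) / (k - 1) := by
    have hquot : 0 ≤ (c - σ) / (1 - σ) := div_nonneg (sub_nonneg.2 hy) (by linarith)
    have harg : 1 ≤ 1 + (k - 1) * ((c - σ) / (1 - σ)) := le_add_of_nonneg_right (by positivity)
    exact div_nonneg (Real.log_nonneg harg) hk1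
  have hhigh : 0 ≤ (1 + ε - c + lam * σ) / k :=
    div_nonneg (add_nonneg (by linarith) (by positivity)) hk0.le
  calc ∫⁻ s in Set.Ioc 0 (1 + ε - σ), f s
      ≤ ∫⁻ s in Set.Ioo 0 (c - σ) ∪ Set.Icc (c - σ) (1 + ε - σ), f s :=
        lintegral_mono_set Set.Ioc_subset_Ioo_union_Icc
    _ ≤ (∫⁻ s in Set.Ioo 0 (c - σ), f s) + ∫⁻ s in Set.Icc (c - σ) (1 + ε - σ), f s :=
        lintegral_union_le _ _ _
    _ ≤ ENNReal.ofReal (schurFibreBound k ε c lam σ) := by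
        rw [schurFibreBound, ENNReal.ofReal_add hlog hhigh,
          setLIntegral_inv_schurWeight_of_lt hk hc hy, setLIntegral_inv_schurWeight_of_ge,
          ENNReal.ofReal_div_of_pos hk0, ENNReal.ofReal_natCast]
        gcongr
        exact setLIntegral_card_admissible_insertCoord_le hcε hlam0 hlam hy0

theorem sum_sieveJE_le_of_threshold {lam C : ℝ} (hk : 1 < k) (hC : 0 ≤ C) (hc : c ≤ 1)
    (hc_ge : 1 - ε ≤ c) (hlam0 : 0 ≤ lam)
    (hlam : ∀ τ, 0 ≤ τ → min (τ + (1 - ε)) (1 + ε) ≤ c + lam * τ)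
    (hfibre : ∀ σ, 0 ≤ σ → σ ≤ 1 - ε → schurFibreBound k ε c lam σ ≤ C)
    {F : (Fin k → ℝ) → ℝ} (hF : MemLp F 2) (hsupp : ∀ t, t ∉ simplex k (1 + ε) → F t = 0) :
    ∑ i, sieveJE ε i F ≤ C * k * sieveI F := by
  refine sum_sieveJE_le_of_weight hC (measurable_schurWeight ε c)
    (fun t ht i hi => schurWeight_pos hc (ht i) hi)
    (fun t ht => sum_admissible_schurWeight_le hc ht) (fun i y hy0 hy => ?_) hF hsupp
  exact (setLIntegral_inv_schurWeight_le hk hc (by linarith) hlam0 hlam hy0 (hy.trans hc_ge)).trans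
    (ENNReal.ofReal_le_ofReal (hfibre _ (Finset.sum_nonneg fun j _ => hy0 j) hy))

end SchurWeight

section Numerics

open Real

variable {K ε σ : ℝ}

theorem log_add_le_log_two_mul_sub_one (hK : 1 ≤ K) :
    log K + 2 / 3 * (1 - 1 / K) ≤ log (2 * K - 1) := by
  have hK0 : 0 < K := by linarith
  have hv0 : 0 ≤ 1 - 1 / K := sub_nonneg.2 ((div_le_one hK0).2 hK)
  have hv1 : 1 - 1 / K ≤ 1 := sub_le_self _ (by positivity)
  have hfactor : 2 * K - 1 = K * (1 + (1 - 1 / K)) := by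
    field_simp
    ring
  rw [hfactor, log_mul hK0.ne' (by positivity)]
  gcongr
  calc 2 / 3 * (1 - 1 / K) ≤ 2 * (1 - 1 / K) / ((1 - 1 / K) + 2) := by
        rw [le_div_iff₀ (by positivity)]
        nlinarith
    _ ≤ log (1 + (1 - 1 / K)) := le_log_one_add_of_nonneg hv0

theorem schurFibreBound_one_le (hK : 1 < K) (hε : ε ≤ 1 / 3) (hσ : σ ≤ 1 - ε) :
    schurFibreBound K ε 1 (1 / 2) σ ≤ log (2 * K - 1) / (K - 1) := by
  have hK1 : 0 < K - 1 := by linarith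
  have hquot0 : 0 ≤ (1 - σ) / (1 - σ) := by
    rcases eq_or_ne (1 - σ) 0 with h | h <;> simp [h]
  have hlog : log (1 + (K - 1) * ((1 - σ) / (1 - σ))) ≤ log K := by
    refine log_le_log (by positivity) ?_
    linarith [mul_le_of_le_one_right hK1.le (div_self_le_one (1 - σ))]
  calc schurFibreBound K ε 1 (1 / 2) σ
      ≤ log K / (K - 1) + 2 / 3 / K := by
        unfold schurFibreBound
        gcongr
        linarith
    _ = (log K + 2 / 3 * (1 - 1 / K)) / (K - 1) := by
        field_simp
    _ ≤ log (2 * K - 1) / (K - 1) := by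
        gcongr
        exact log_add_le_log_two_mul_sub_one hK.le

theorem mul_two_mul_div_sub_one_le (hε : 1 / 3 ≤ ε) (hσ0 : 0 ≤ σ) (hσ : σ < 1) :
    σ * (2 * ((1 - ε - σ) / (1 - σ)) - 1) ≤ 1 / 24 := by
  have hσ1 : 0 < 1 - σ := by linarith
  have hclear : σ * (2 * ((1 - ε - σ) / (1 - σ)) - 1) = σ * (1 - 2 * ε - σ) / (1 - σ) := by
    field_simp
    ring
  rw [hclear, div_le_iff₀ hσ1]
  nlinarith [sq_nonneg (σ - 3 / 16)]

theorem log_le_log_add_div_sub_one {x a : ℝ} (hx : 0 < x) (ha : 0 < a) :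
    log x ≤ log a + (x / a - 1) := by
  have htangent := log_le_sub_one_of_pos (div_pos hx ha)
  rw [log_div hx.ne' ha.ne'] at htangent
  linarith

theorem log_half_add_log_three_le (hK : 2 ≤ K) : log (K / 2) + log 3 ≤ log (2 * K - 1) := by
  rw [← log_mul (by positivity) (by norm_num)]
  exact log_le_log (by positivity) (by linarith)

theorem schurFibreBound_one_sub_le (hK : 2 ≤ K) (hε : 1 / 3 ≤ ε) (hσ0 : 0 ≤ σ)
    (hσ : σ ≤ 1 - ε) :
    schurFibreBound K ε (1 - ε) 1 σ ≤ log (2 * K - 1) / (K - 1) := by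
  have hK1 : 0 < K - 1 := by linarith
  have hK0 : 0 < K := by linarith
  have hσ1 : 0 < 1 - σ := by linarith
  set x := (1 - ε - σ) / (1 - σ) with hx
  have hεx : ε = (1 - σ) * (1 - x) := by
    rw [hx]
    field_simp
    ring
  -- With the tangent line of `log` at `K / 2` the main `x`-dependence cancels, and the remaining
  -- error, at most `1 / 24`, fits into `log 3 - 1`.
  have htangent : log (1 + (K - 1) * x) ≤ log (K / 2) + ((1 + (K - 1) * x) / (K / 2) - 1) :=
    log_le_log_add_div_sub_one (by positivity) (by positivity)
  have herror : (K - 1) / K * (σ * (2 * x - 1)) ≤ 1 / 24 := by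
    have hfactor1 : (K - 1) / K ≤ 1 := (div_le_one hK0).2 (by linarith)
    have hfactor0 : 0 ≤ (K - 1) / K := by positivity
    nlinarith [mul_two_mul_div_sub_one_le hε hσ0 (by linarith)]
  calc schurFibreBound K ε (1 - ε) 1 σ
      = (log (1 + (K - 1) * x) + (K - 1) / K * (2 * ε + σ)) / (K - 1) := by
        rw [schurFibreBound, ← hx]
        field_simp
        ring
    _ ≤ (log (K / 2) + ((1 + (K - 1) * x) / (K / 2) - 1) + (K - 1) / K * (2 * ε + σ)) /
          (K - 1) := by
        gcongr
    _ = (log (K / 2) + (1 + (K - 1) / K * (σ * (2 * x - 1)))) / (K - 1) := by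
        rw [hεx]
        field_simp
        ring
    _ ≤ log (2 * K - 1) / (K - 1) := by
        gcongr
        linarith [log_half_add_log_three_le hK, log_three_gt_d9]

end Numerics

section Thresholds

variable {k : ℕ} {ε : ℝ} {F : (Fin k → ℝ) → ℝ}

theorem log_two_mul_sub_one_div_nonneg {K : ℝ} (hK : 1 ≤ K) :
    0 ≤ Real.log (2 * K - 1) / (K - 1) :=
  div_nonneg (Real.log_nonneg (by linarith)) (by linarith)

theorem sum_sieveJE_le_of_le_third (hk : 1 < k) (hε0 : 0 ≤ ε) (hε : ε ≤ 1 / 3)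
    (hF : MemLp F 2) (hsupp : ∀ t, t ∉ simplex k (1 + ε) → F t = 0) :
    ∑ i, sieveJE ε i F ≤ Real.log (2 * k - 1) / (k - 1) * k * sieveI F := by
  have hk' : (1 : ℝ) < k := mod_cast hk
  refine sum_sieveJE_le_of_threshold (c := 1) (lam := 1 / 2) hk
    (log_two_mul_sub_one_div_nonneg hk'.le) le_rfl (by linarith) (by norm_num) (fun τ _ => ?_)
    (fun σ _ hσ => schurFibreBound_one_le hk' hε hσ) hF hsupp
  linarith [min_le_left (τ + (1 - ε)) (1 + ε), min_le_right (τ + (1 - ε)) (1 + ε)]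

theorem sum_sieveJE_le_of_third_le (hk : 2 ≤ k) (hε : 1 / 3 ≤ ε)
    (hF : MemLp F 2) (hsupp : ∀ t, t ∉ simplex k (1 + ε) → F t = 0) :
    ∑ i, sieveJE ε i F ≤ Real.log (2 * k - 1) / (k - 1) * k * sieveI F := by
  have hk' : (2 : ℝ) ≤ k := mod_cast hk
  refine sum_sieveJE_le_of_threshold (c := 1 - ε) (lam := 1) hk
    (log_two_mul_sub_one_div_nonneg (by linarith)) (by linarith) le_rfl zero_le_one
    (fun τ _ => ?_) (fun σ hσ0 hσ => schurFibreBound_one_sub_le hk' hε hσ0 hσ) hF hsupp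
  linarith [min_le_left (τ + (1 - ε)) (1 + ε)]

end Thresholds

/-- **Polymath8b, Proposition 6.5**: `M_{k,ε} ≤ (k/(k-1)) log(2k-1)` for `k ≥ 2` and
`0 ≤ ε < 1`; equivalently, `∑ᵢ J_{i,1-ε}(F) ≤ (k/(k-1)) log(2k-1) · I(F)` for every
square-integrable `F` supported on `(1+ε) · R_k`. -/
theorem MkE_upper_bound (k : ℕ) (hk : 2 ≤ k) (ε : ℝ) (hε0 : 0 ≤ ε) (hε1 : ε < 1) :
    MquantE k ε ≤ (k : ℝ) / ((k : ℝ) - 1) * Real.log (2 * k - 1) ∧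
    ∀ F : (Fin k → ℝ) → ℝ, MemLp F 2 volume →
      (∀ t, t ∉ simplex k (1 + ε) → F t = 0) →
      ∑ i, sieveJE ε i F ≤ (k : ℝ) / ((k : ℝ) - 1) * Real.log (2 * k - 1) * sieveI F := by
  have hk2 : (2 : ℝ) ≤ k := mod_cast hk
  have hbound {F : (Fin k → ℝ) → ℝ} (hF : MemLp F 2)
      (hsupp : ∀ t, t ∉ simplex k (1 + ε) → F t = 0) :
      ∑ i, sieveJE ε i F ≤ (k : ℝ) / ((k : ℝ) - 1) * Real.log (2 * k - 1) * sieveI F := by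
    rw [div_mul_comm]
    rcases le_total ε (1 / 3) with hε | hε
    · exact sum_sieveJE_le_of_le_third hk hε0 hε hF hsupp
    · exact sum_sieveJE_le_of_third_le hk hε hF hsupp
  refine ⟨?_, fun F hF hsupp => hbound hF hsupp⟩
  have hconst : 0 ≤ (k : ℝ) / ((k : ℝ) - 1) * Real.log (2 * k - 1) :=
    mul_nonneg (div_nonneg (by linarith) (by linarith)) (Real.log_nonneg (by linarith))
  refine Real.sSup_le ?_ hconst
  rintro _ ⟨F, hF, hsupp, -, rfl⟩
  exact div_le_of_le_mul₀ (sieveI_nonneg F) hconst (hbound hF hsupp)
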